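/- Let M = (S, A, δ) be a finite fuzzy transition system with discount factor γ ∈ (0,1), let d* : S × S → [0,1] satisfy Δ(d*) = d*, let ε ∈ (0,1), and set N = ⌈log ε / log γ⌉. Then ‖Δ^N(⊥) − d*‖ ≤ ε. -/

import Mathlib

/-!
The functional `Δ` is a `γ`-contraction for the sup norm: each of the operations building it (the
infimum over couplings of `max min (d, x)`, the minimum and maximum over finite sets, the maximum
over labels) preserves the relation `d ≤ d' + c` for a constant `c ≥ 0`, and the final
multiplication by `γ` scales `c`. Since `|⊥ - d*| ≤ 1` and `d*` is fixed, induction gives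
`|Δ^n(⊥) - d*| ≤ γ ^ n`, and `γ ^ N ≤ ε` as soon as `N ≥ log ε / log γ`.
-/

open Finset
open scoped Classical

noncomputable section

variable {S A : Type*} [Fintype S] [Nonempty S] [Fintype A] [Nonempty A]

/-- The maximum value of a fuzzy subset `μ : S → ℝ` over the finite nonempty set `S`. -/
def maxS (μ : S → ℝ) : ℝ := Finset.univ.sup' Finset.univ_nonempty μ

/-- Feasibility for the mathematical program defining the lifted distance. -/
def Feasible (μ η : S → ℝ) (x : S → S → ℝ) : Prop :=
  (∀ u v, 0 ≤ x u v) ∧ (∀ u, maxS (x u) = μ u) ∧ (∀ v, maxS (fun u => x u v) = η v)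

/-- The lifted distance `d̂(μ,η)` induced by `d` on fuzzy subsets. -/
def liftDist (d : S → S → ℝ) (μ η : S → ℝ) : ℝ :=
  if maxS μ = maxS η then
    sInf {r : ℝ | ∃ x : S → S → ℝ, Feasible μ η x ∧
      r = Finset.univ.sup' Finset.univ_nonempty
            (fun p : S × S => min (d p.1 p.2) (x p.1 p.2))}
  else 1

/-- Distance from a fuzzy subset to a finite set of fuzzy subsets. -/
def liftDistSet (d : S → S → ℝ) (μ : S → ℝ) (W : Finset (S → ℝ)) : ℝ :=
  if h : W.Nonempty then W.inf' h (liftDist d μ) else 1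

/-- Max of `f` over a finite set of fuzzy subsets, `0` if the set is empty. -/
def sup0 (Y : Finset (S → ℝ)) (f : (S → ℝ) → ℝ) : ℝ :=
  if h : Y.Nonempty then Y.sup' h f else 0

/-- Hausdorff distance induced by `d` on finite sets of fuzzy subsets. -/
def Hdist (d : S → S → ℝ) (Y Z : Finset (S → ℝ)) : ℝ :=
  if Y = ∅ ∧ Z = ∅ then 0
  else max (sup0 Y fun μ => liftDistSet d μ Z) (sup0 Z fun ν => liftDistSet d ν Y)

/-- The functional `Δ` with discount factor `γ` on a fuzzy transition system `δ`. -/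
def Delta (γ : ℝ) (δ : S → A → Finset (S → ℝ)) (d : S → S → ℝ) : S → S → ℝ :=
  fun s t => γ * Finset.univ.sup' Finset.univ_nonempty (fun a => Hdist d (δ s a) (δ t a))

/-- All fuzzy subsets occurring in the transition function take values in `[0,1]`. -/
def FTSvalid (δ : S → A → Finset (S → ℝ)) : Prop :=
  ∀ s a, ∀ μ ∈ δ s a, ∀ u, μ u ∈ Set.Icc (0:ℝ) 1

/-- The set `Θ_M` of membership values occurring in the system, together with `0` and `1`. -/
def ThetaM (δ : S → A → Finset (S → ℝ)) : Set ℝ :=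
  {r : ℝ | ∃ s a μ, μ ∈ δ s a ∧ ∃ u, μ u = r} ∪ {0, 1}

/-- The supremum norm of the difference of two distance functions. -/
def dnorm (d d' : S → S → ℝ) : ℝ :=
  Finset.univ.sup' Finset.univ_nonempty (fun p : S × S => |d p.1 p.2 - d' p.1 p.2|)

end

section Contraction

variable {S A : Type*} [Fintype S] [Nonempty S] [Fintype A] [Nonempty A]

/-- No sign condition on `d` is needed: the set of objective values is bounded below because
couplings are nonnegative, and when there is no coupling both infima take the value `0`. -/
theorem liftDist_le_add {d d' : S → S → ℝ} {c : ℝ} (hc : 0 ≤ c)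
    (h : ∀ s t, d s t ≤ d' s t + c) (μ η : S → ℝ) :
    liftDist d μ η ≤ liftDist d' μ η + c := by
  unfold liftDist
  split_ifs with hm
  · rw [← sub_le_iff_le_add]
    by_cases hx : ∃ x, Feasible μ η x
    · obtain ⟨x₀, hx₀⟩ := hx
      refine le_csInf ⟨_, x₀, hx₀, rfl⟩ ?_
      rintro r ⟨x, hx, rfl⟩
      rw [sub_le_iff_le_add]
      have hbdd : BddBelow {r : ℝ | ∃ x : S → S → ℝ, Feasible μ η x ∧
          r = Finset.univ.sup' Finset.univ_nonempty
            (fun p : S × S => min (d p.1 p.2) (x p.1 p.2))} := by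
        obtain ⟨s⟩ := (inferInstance : Nonempty S)
        refine ⟨min (d s s) 0, ?_⟩
        rintro r ⟨y, hy, rfl⟩
        exact (min_le_min_left _ (hy.1 s s)).trans
          (Finset.le_sup' (fun p : S × S => min (d p.1 p.2) (y p.1 p.2))
            (Finset.mem_univ (s, s)))
      refine (csInf_le hbdd ⟨x, hx, rfl⟩).trans (Finset.sup'_le _ _ fun p _ => ?_)
      have hp := Finset.le_sup' (fun p : S × S => min (d' p.1 p.2) (x p.1 p.2))
        (Finset.mem_univ p)
      refine le_trans ?_ (add_le_add_left hp c)
      rw [← min_add_add_right]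
      exact min_le_min (h _ _) (by linarith)
    · have hempty : ∀ e : S → S → ℝ, {r : ℝ | ∃ x : S → S → ℝ, Feasible μ η x ∧
          r = Finset.univ.sup' Finset.univ_nonempty
            (fun p : S × S => min (e p.1 p.2) (x p.1 p.2))} = ∅ := by
        intro e
        ext r
        simp only [Set.mem_setOf_eq, Set.mem_empty_iff_false, iff_false]
        rintro ⟨x, hx', _⟩
        exact hx ⟨x, hx'⟩
      rw [hempty, hempty]
      linarith
  · linarith

theorem liftDistSet_le_add {d d' : S → S → ℝ} {c : ℝ} (hc : 0 ≤ c)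
    (h : ∀ s t, d s t ≤ d' s t + c) (μ : S → ℝ) (W : Finset (S → ℝ)) :
    liftDistSet d μ W ≤ liftDistSet d' μ W + c := by
  unfold liftDistSet
  split_ifs with hW
  · rw [← sub_le_iff_le_add]
    refine Finset.le_inf' _ _ fun ν hν => ?_
    rw [sub_le_iff_le_add]
    exact (Finset.inf'_le _ hν).trans (liftDist_le_add hc h μ ν)
  · linarith

theorem sup0_le_add {f g : (S → ℝ) → ℝ} {c : ℝ} (hc : 0 ≤ c)
    (h : ∀ μ, f μ ≤ g μ + c) (Y : Finset (S → ℝ)) : sup0 Y f ≤ sup0 Y g + c := by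
  unfold sup0
  split_ifs with hY
  · exact Finset.sup'_le _ _ fun μ hμ =>
      (h μ).trans (add_le_add_left (Finset.le_sup' g hμ) c)
  · linarith

theorem Hdist_le_add {d d' : S → S → ℝ} {c : ℝ} (hc : 0 ≤ c)
    (h : ∀ s t, d s t ≤ d' s t + c) (Y Z : Finset (S → ℝ)) :
    Hdist d Y Z ≤ Hdist d' Y Z + c := by
  unfold Hdist
  split_ifs
  · linarith
  · rw [← max_add_add_right]
    exact max_le_max (sup0_le_add hc (fun μ => liftDistSet_le_add hc h μ Z) Y)
      (sup0_le_add hc (fun ν => liftDistSet_le_add hc h ν Y) Z)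

theorem Delta_le_add {γ : ℝ} (hγ : 0 ≤ γ) (δ : S → A → Finset (S → ℝ))
    {d d' : S → S → ℝ} {c : ℝ} (hc : 0 ≤ c) (h : ∀ s t, d s t ≤ d' s t + c) (s t : S) :
    Delta γ δ d s t ≤ Delta γ δ d' s t + γ * c := by
  unfold Delta
  rw [← mul_add]
  refine mul_le_mul_of_nonneg_left (Finset.sup'_le _ _ fun a _ => ?_) hγ
  exact (Hdist_le_add hc h _ _).trans (add_le_add_left
    (Finset.le_sup' (fun a => Hdist d' (δ s a) (δ t a)) (Finset.mem_univ a)) c)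

/-- `Δ` is a `γ`-contraction for the sup norm, in pointwise form. -/
theorem abs_Delta_sub_le {γ : ℝ} (hγ : 0 ≤ γ) (δ : S → A → Finset (S → ℝ))
    {d d' : S → S → ℝ} {c : ℝ} (hc : 0 ≤ c) (h : ∀ s t, |d s t - d' s t| ≤ c) (s t : S) :
    |Delta γ δ d s t - Delta γ δ d' s t| ≤ γ * c := by
  have h₁ := Delta_le_add hγ δ hc (d := d) (d' := d')
    (fun s t => by linarith [(abs_le.mp (h s t)).2]) s t
  have h₂ := Delta_le_add hγ δ hc (d := d') (d' := d)
    (fun s t => by linarith [(abs_le.mp (h s t)).1]) s t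
  exact abs_le.mpr ⟨by linarith, by linarith⟩

end Contraction

/-- for `γ ∈ (0,1)`, a fixpoint `d*` of `Δ`, `ε ∈ (0,1)` and
`N = ⌈log ε / log γ⌉`, one has `‖Δ^N(⊥) − d*‖ ≤ ε`. -/
theorem iterate_approximates_fixpoint {S A : Type*}
    [Fintype S] [Nonempty S] [Fintype A] [Nonempty A]
    (γ : ℝ) (hγ : γ ∈ Set.Ioo (0:ℝ) 1)
    (δ : S → A → Finset (S → ℝ)) (hδ : FTSvalid δ)
    (dstar : S → S → ℝ)
    (hdstar01 : ∀ s t, dstar s t ∈ Set.Icc (0:ℝ) 1)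
    (hfix : Delta γ δ dstar = dstar)
    (ε : ℝ) (hε : ε ∈ Set.Ioo (0:ℝ) 1)
    (N : ℕ) (hN : (N : ℤ) = ⌈Real.log ε / Real.log γ⌉) :
    dnorm ((Delta γ δ)^[N] (fun _ _ => 0)) dstar ≤ ε := by
  obtain ⟨hγ0, hγ1⟩ := hγ
  have key : ∀ n : ℕ, ∀ s t,
      |(Delta γ δ)^[n] (fun _ _ => 0) s t - dstar s t| ≤ γ ^ n := by
    intro n
    induction n with
    | zero =>
      intro s t
      obtain ⟨h0, h1⟩ := hdstar01 s t
      simpa [abs_of_nonneg h0] using h1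
    | succ n ih =>
      intro s t
      have h := abs_Delta_sub_le hγ0.le δ (pow_nonneg hγ0.le n) ih s t
      rwa [hfix, ← Function.iterate_succ_apply' (Delta γ δ), ← pow_succ'] at h
  have hpow : γ ^ N ≤ ε := by
    have hle : Real.log ε / Real.log γ ≤ (N : ℝ) := by
      have h := Int.le_ceil (Real.log ε / Real.log γ)
      rw [← hN] at h
      exact_mod_cast h
    -- `log γ < 0`, so clearing the denominator reverses the inequality.
    rw [div_le_iff_of_neg (Real.log_neg hγ0 hγ1), ← Real.log_pow] at hle
    exact (Real.log_le_log_iff (pow_pos hγ0 N) hε.1).mp hle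
  exact Finset.sup'_le _ _ fun p _ => (key N p.1 p.2).trans hpow
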